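/- (Group efficiency) For every t ∈ {1, …, T}, the sum of Asymmetric Data Shapley values over group D_t equals the incremental utility of that group relative to all preceding groups: Σ_{z ∈ D_t} φ^σ(z; v, D) = v(U_t) − v(U_{t−1}). -/

import Mathlib

/-!
The marginal contribution of a uniformly random player joining a uniformly random `k`-element set of
the others has expectation `m (k + 1) - m k`, where `m k` is the average of the utility over the
`k`-element subsets of the group: the coalition is a uniform `k`-set before the player joins and a
uniform `(k + 1)`-set afterwards. Summing over the sizes `k`, the differences telescope. The ADS
values of `D_t` are the Shapley values of the game `S ↦ v (U_{t-1} ∪ S)`.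
-/

open Finset

variable {α : Type*}

/-- Prefix union `U_t = D₁ ∪ ⋯ ∪ D_t` (groups are 0-indexed, so this is the union of
the groups with index `< t`). -/
def prefixUnion [DecidableEq α] (Dg : ℕ → Finset α) (t : ℕ) : Finset α :=
  (Finset.range t).biUnion Dg

/-- Asymmetric Data Shapley value (subset form) of a source `z` belonging to group `Dg t`. -/
noncomputable def ADS [DecidableEq α] (Dg : ℕ → Finset α) (v : Finset α → ℝ) (t : ℕ)
    (z : α) : ℝ :=
  (1 / (Dg t).card) *
    ∑ S ∈ ((Dg t).erase z).powerset,
      ((((Dg t).card - 1).choose S.card : ℝ))⁻¹ *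
        (v (prefixUnion Dg t ∪ S ∪ {z}) - v (prefixUnion Dg t ∪ S))

open scoped BigOperators

section Expect

variable {ι κ M : Type*} [AddCommMonoid M] [Module ℚ≥0 M]

/-- Both sides are the average over the edges of a biregular bipartite graph; double counting the
edges gives `#s * c = #t' * d`. -/
theorem expect_comm_of_card_eq {s : Finset ι} {t : ι → Finset κ} {t' : Finset κ}
    {s' : κ → Finset ι} {c d : ℕ} (h : ∀ x y, x ∈ s ∧ y ∈ t x ↔ x ∈ s' y ∧ y ∈ t')
    (ht : ∀ x ∈ s, #(t x) = c) (hs' : ∀ y ∈ t', #(s' y) = d) (f : ι → κ → M) :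
    𝔼 x ∈ s, 𝔼 y ∈ t x, f x y = 𝔼 y ∈ t', 𝔼 x ∈ s' y, f x y := by
  have card_edges : #s * c = #t' * d := by
    rw [← sum_const_nat ht, ← sum_const_nat hs']
    simpa only [card_eq_sum_ones] using sum_comm' h
  calc 𝔼 x ∈ s, 𝔼 y ∈ t x, f x y
      = ((#s * c : ℕ) : ℚ≥0)⁻¹ • ∑ x ∈ s, ∑ y ∈ t x, f x y := by
        rw [Nat.cast_mul, mul_inv, mul_smul, smul_sum (r := (c : ℚ≥0)⁻¹), expect]
        exact congrArg _ (sum_congr rfl fun x hx ↦ by rw [expect, ht x hx])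
    _ = ((#t' * d : ℕ) : ℚ≥0)⁻¹ • ∑ y ∈ t', ∑ x ∈ s' y, f x y := by
        rw [card_edges, sum_comm' h]
    _ = 𝔼 y ∈ t', 𝔼 x ∈ s' y, f x y := by
        rw [Nat.cast_mul, mul_inv, mul_smul, smul_sum (r := (d : ℚ≥0)⁻¹), expect]
        exact congrArg _ (sum_congr rfl fun y hy ↦ by rw [expect, hs' y hy])

end Expect

section PowersetCard

variable [DecidableEq α]

theorem injOn_insert_powersetCard_erase (A : Finset α) (z : α) (k : ℕ) :
    Set.InjOn (insert z) (powersetCard k (A.erase z) : Set (Finset α)) :=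
  insert_erase_invOn.2.injOn.mono fun _ hS ↦
    notMem_mono (mem_powersetCard.1 hS).1 (notMem_erase z A)

theorem image_insert_powersetCard_erase {A : Finset α} {z : α} (hz : z ∈ A) (k : ℕ) :
    (powersetCard k (A.erase z)).image (insert z) = {R ∈ powersetCard (k + 1) A | z ∈ R} := by
  ext R
  simp only [mem_image, mem_filter, mem_powersetCard, subset_erase]
  constructor
  · rintro ⟨S, ⟨⟨hSA, hzS⟩, rfl⟩, rfl⟩
    exact ⟨⟨insert_subset hz hSA, card_insert_of_notMem hzS⟩, mem_insert_self z S⟩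
  · rintro ⟨⟨hRA, hR⟩, hzR⟩
    exact ⟨R.erase z, ⟨⟨(erase_subset z R).trans hRA, notMem_erase z R⟩,
      by rw [card_erase_of_mem hzR, hR, Nat.add_sub_cancel]⟩, insert_erase hzR⟩

variable {M : Type*} [AddCommMonoid M] [Module ℚ≥0 M]

theorem expect_expect_powersetCard_erase {A : Finset α} {k : ℕ} (hk : k < #A)
    (f : Finset α → M) :
    𝔼 z ∈ A, 𝔼 S ∈ powersetCard k (A.erase z), f S = 𝔼 S ∈ powersetCard k A, f S := by
  have card_left : ∀ z ∈ A, #(powersetCard k (A.erase z)) = (#A - 1).choose k := fun z hz ↦ by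
    rw [card_powersetCard, card_erase_of_mem hz]
  have card_right : ∀ S ∈ powersetCard k A, #(A \ S) = #A - k := fun S hS ↦ by
    rw [card_sdiff_of_subset (mem_powersetCard.1 hS).1, (mem_powersetCard.1 hS).2]
  rw [expect_comm_of_card_eq (t' := powersetCard k A) (s' := fun S ↦ A \ S) _ card_left card_right]
  · refine expect_congr rfl fun S hS ↦ expect_const (card_pos.1 ?_) _
    rw [card_right S hS]
    exact Nat.sub_pos_of_lt hk
  · intro z S
    simp only [mem_powersetCard, mem_sdiff, subset_erase]
    tauto

theorem expect_expect_powersetCard_erase_insert (A : Finset α) (k : ℕ) (f : Finset α → M) :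
    𝔼 z ∈ A, 𝔼 S ∈ powersetCard k (A.erase z), f (insert z S) =
      𝔼 R ∈ powersetCard (k + 1) A, f R := by
  have card_left : ∀ z ∈ A, #{R ∈ powersetCard (k + 1) A | z ∈ R} = (#A - 1).choose k :=
    fun z hz ↦ by
      rw [← image_insert_powersetCard_erase hz,
        card_image_of_injOn (injOn_insert_powersetCard_erase A z k), card_powersetCard,
        card_erase_of_mem hz]
  have card_right : ∀ R ∈ powersetCard (k + 1) A, #R = k + 1 := fun R hR ↦
    (mem_powersetCard.1 hR).2
  calc 𝔼 z ∈ A, 𝔼 S ∈ powersetCard k (A.erase z), f (insert z S)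
      = 𝔼 z ∈ A, 𝔼 R ∈ powersetCard (k + 1) A with z ∈ R, f R :=
        expect_congr rfl fun z hz ↦ by
          rw [← image_insert_powersetCard_erase hz,
            expect_image (injOn_insert_powersetCard_erase A z k)]
    _ = 𝔼 R ∈ powersetCard (k + 1) A, 𝔼 _z ∈ R, f R := by
        refine expect_comm_of_card_eq (s' := fun R ↦ R) (fun z R ↦ ?_) card_left card_right _
        simp only [mem_filter, mem_powersetCard]
        exact ⟨fun h ↦ ⟨h.2.2, h.2.1⟩, fun h ↦ ⟨h.2.1 h.1, h.2, h.1⟩⟩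
    _ = 𝔼 R ∈ powersetCard (k + 1) A, f R :=
        expect_congr rfl fun R hR ↦
          expect_const (card_pos.1 ((card_right R hR).symm ▸ k.succ_pos)) _

end PowersetCard

section Shapley

variable [DecidableEq α]

/-- The Shapley value of player `z` in the game `w` on the player set `A`: the expected marginal
contribution of `z` to a random coalition of the other players whose size is uniform in
`{0, …, #A - 1}` and which is uniform among the coalitions of that size. The values of `w` may lie
in any rational vector space. -/
def shapleyValue {M : Type*} [AddCommGroup M] [Module ℚ≥0 M] (A : Finset α)
    (w : Finset α → M) (z : α) : M :=
  𝔼 k ∈ range #A, 𝔼 S ∈ powersetCard k (A.erase z), (w (insert z S) - w S)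

theorem sum_shapleyValue {M : Type*} [AddCommGroup M] [Module ℚ≥0 M] (A : Finset α)
    (w : Finset α → M) : ∑ z ∈ A, shapleyValue A w z = w A - w ∅ := by
  let layerMean (k : ℕ) : M := 𝔼 S ∈ powersetCard k A, w S
  have expect_marginal : ∀ k ∈ range #A,
      𝔼 z ∈ A, 𝔼 S ∈ powersetCard k (A.erase z), (w (insert z S) - w S) =
        layerMean (k + 1) - layerMean k := fun k hk ↦ by
    simp only [expect_sub_distrib]
    rw [expect_expect_powersetCard_erase_insert,
      expect_expect_powersetCard_erase (mem_range.1 hk)]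
  calc ∑ z ∈ A, shapleyValue A w z
      = #A • 𝔼 k ∈ range #A, 𝔼 z ∈ A, 𝔼 S ∈ powersetCard k (A.erase z),
          (w (insert z S) - w S) := by
        rw [← card_smul_expect, expect_comm]
        rfl
    _ = ∑ k ∈ range #A, 𝔼 z ∈ A, 𝔼 S ∈ powersetCard k (A.erase z),
          (w (insert z S) - w S) := by
        rw [← card_smul_expect (range #A), card_range]
    _ = ∑ k ∈ range #A, (layerMean (k + 1) - layerMean k) := sum_congr rfl expect_marginal
    _ = layerMean #A - layerMean 0 := sum_range_sub layerMean #A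
    _ = w A - w ∅ := by
        simp only [layerMean, powersetCard_self, powersetCard_zero, expect_singleton]

theorem shapleyValue_eq_sum_powerset {K : Type*} [Field K] [CharZero K] {A : Finset α} {z : α}
    (hz : z ∈ A) (w : Finset α → K) :
    shapleyValue A w z = 1 / #A *
      ∑ S ∈ (A.erase z).powerset, ((#A - 1).choose #S : K)⁻¹ * (w (insert z S) - w S) := by
  rw [shapleyValue, expect_eq_sum_div_card, card_range, div_eq_inv_mul, one_div, sum_powerset,
    card_erase_add_one hz]
  refine congrArg _ (sum_congr rfl fun k _ ↦ ?_)
  rw [expect_eq_sum_div_card, card_powersetCard, card_erase_of_mem hz, div_eq_inv_mul, mul_sum]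
  exact sum_congr rfl fun S hS ↦ by rw [(mem_powersetCard.1 hS).2]

end Shapley

section ADS

variable [DecidableEq α]

theorem prefixUnion_succ (Dg : ℕ → Finset α) (t : ℕ) :
    prefixUnion Dg (t + 1) = prefixUnion Dg t ∪ Dg t := by
  rw [prefixUnion, range_add_one, biUnion_insert, union_comm, prefixUnion]

theorem ADS_eq_shapleyValue (Dg : ℕ → Finset α) (v : Finset α → ℝ) {t : ℕ} {z : α}
    (hz : z ∈ Dg t) :
    ADS Dg v t z = shapleyValue (Dg t) (fun S ↦ v (prefixUnion Dg t ∪ S)) z := by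
  simp only [shapleyValue_eq_sum_powerset hz, ADS, union_singleton, union_insert]

theorem ads_group_efficiency_general (Dg : ℕ → Finset α) (v : Finset α → ℝ) (t : ℕ) :
    ∑ z ∈ Dg t, ADS Dg v t z = v (prefixUnion Dg (t + 1)) - v (prefixUnion Dg t) := by
  rw [sum_congr rfl fun z ↦ ADS_eq_shapleyValue Dg v, sum_shapleyValue, prefixUnion_succ,
    union_empty]

end ADS

/-- Group efficiency: the sum of ADS values over group `D_t` equals the incremental
utility of that group relative to the union of all preceding groups. -/
theorem ads_group_efficiency [DecidableEq α]
    (T : ℕ) (hT : 1 ≤ T) (Dg : ℕ → Finset α)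
    (hdisj : ∀ i < T, ∀ j < T, i ≠ j → Disjoint (Dg i) (Dg j))
    (hne : ∀ j < T, (Dg j).Nonempty)
    (D : Finset α) (hD : D = (Finset.range T).biUnion Dg)
    (v : Finset α → ℝ)
    (t : ℕ) (ht : t < T) :
    ∑ z ∈ Dg t, ADS Dg v t z = v (prefixUnion Dg (t + 1)) - v (prefixUnion Dg t) :=
  ads_group_efficiency_general Dg v t
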